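/- Let n ≥ 2. The map s : S_n → S̃_n satisfies p ∘ s = id_{S_n}, and the map Z/2Z × S_n → S̃_n sending (u, x) to z^u · s(x) is a bijection; in other words, every element of S̃_n has a unique normal form z^u · s(x) with u ∈ {0,1} and x ∈ S_n. -/

import Mathlib

open Equiv
open scoped Classical

/-- Generator `z` as an element of the free group. -/
def zF (n : ℕ) : FreeGroup (Fin (n-1) ⊕ Unit) := FreeGroup.of (Sum.inr ())

/-- Generator `τ̃ᵢ` as an element of the free group. -/
def tF (n : ℕ) (i : Fin (n-1)) : FreeGroup (Fin (n-1) ⊕ Unit) := FreeGroup.of (Sum.inl i)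

/-- Relations of the spin extension of the symmetric group. -/
def spinRels (n : ℕ) : Set (FreeGroup (Fin (n-1) ⊕ Unit)) :=
  {zF n * zF n} ∪
  {w | ∃ i : Fin (n-1), w = zF n * tF n i * (tF n i * zF n)⁻¹} ∪
  {w | ∃ i : Fin (n-1), w = tF n i * tF n i * (zF n)⁻¹} ∪
  {w | ∃ i j : Fin (n-1), 1 < |(i : ℤ) - (j : ℤ)| ∧ w = tF n i * tF n j * (zF n * tF n j * tF n i)⁻¹} ∪
  {w | ∃ i j : Fin (n-1), (j : ℕ) = (i : ℕ) + 1 ∧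
        w = tF n i * tF n j * tF n i * (tF n j * tF n i * tF n j)⁻¹}

/-- The spin extension `S̃ₙ` of the symmetric group, as a presented group. -/
abbrev SpinSym (n : ℕ) := PresentedGroup (spinRels n)

/-- The central element `z` of `S̃ₙ`. -/
def zt (n : ℕ) : SpinSym n := PresentedGroup.of (Sum.inr ())

/-- The generator `τ̃ᵢ` of `S̃ₙ`. -/
def tt (n : ℕ) (i : Fin (n-1)) : SpinSym n := PresentedGroup.of (Sum.inl i)

/-- `i` as an element of `Fin n`. -/
def finL (n : ℕ) (i : Fin (n-1)) : Fin n := ⟨i, by have := i.2; omega⟩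

/-- `i+1` as an element of `Fin n`. -/
def finR (n : ℕ) (i : Fin (n-1)) : Fin n := ⟨(i : ℕ) + 1, by have := i.2; omega⟩

/-- `τ̃ₖ` for a natural number index, `1` out of range. -/
def ttN (n : ℕ) (k : ℕ) : SpinSym n := if h : k < n - 1 then tt n ⟨k, h⟩ else 1

/-- For `i ≤ j`, the word `τ̃ᵢ·τ̃ᵢ₊₁⋯τ̃ⱼ₋₂·τ̃ⱼ₋₁·τ̃ⱼ₋₂⋯τ̃ᵢ₊₁·τ̃ᵢ` (equal to `1` when `i = j`). -/
def ttilCore (n i j : ℕ) : SpinSym n :=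
  (((List.range' i (j - i)) ++ (List.range' i (j - 1 - i)).reverse).map (ttN n)).prod

/-- The lifted transpositions `τ̃_{i,j}`, with `τ̃_{j,i} = z·τ̃_{i,j}` for `i < j`,
and `τ̃_{k,k} = 1`. -/
def ttil (n i j : ℕ) : SpinSym n := if j < i then zt n * ttilCore n j i else ttilCore n i j

/-- `i` is the sequence of indices of a factorization of `x` as a product of
transpositions `t_{i_0,0} ⋯ t_{i_{n-1},n-1}` with `i_k ≤ k`. -/
def IsFactorization (n : ℕ) (x : Equiv.Perm (Fin n)) (i : Fin n → Fin n) : Prop :=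
  (∀ k, i k ≤ k) ∧ x = ((List.finRange n).map (fun k => Equiv.swap (i k) k)).prod

/-- The section `s : Sₙ → S̃ₙ`, defined from the unique factorization
`x = t_{i_0,0} ⋯ t_{i_{n-1},n-1}` by `s x = τ̃_{i_0,0} ⋯ τ̃_{i_{n-1},n-1}`. -/
noncomputable def sec (n : ℕ) (x : Equiv.Perm (Fin n)) : SpinSym n :=
  if h : ∃ i, IsFactorization n x i then
    ((List.finRange n).map (fun k => ttil n (h.choose k).val k.val)).prod
  else 1

/-- The `2`-cocycle `c : Sₙ × Sₙ → ℤ/2ℤ` defined by `s(x)·s(y) = z^{c(x,y)}·s(x·y)`. -/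
noncomputable def coc (n : ℕ) (x y : Equiv.Perm (Fin n)) : ZMod 2 :=
  if sec n x * sec n y = sec n (x * y) then 0 else 1

/-! The subgroup `⟨z⟩` is central, and modulo it the `τ̃ᵢ` satisfy the Coxeter relations of
type `A`. A group generated by elements `t₀, …, tₙ₋₂` that satisfy these relations and map to the
adjacent transpositions maps injectively to `Sₙ`: every coset of `⟨t₀, …, tₘ₋₁⟩` in `⟨t₀, …, tₘ⟩`
other than the trivial one contains some `tₘ ⋯ tᵢ₊₁ tᵢ`, whose image sends `i` to `m + 1`, a point
fixed by the image of `⟨t₀, …, tₘ₋₁⟩`. Hence `ker p = ⟨z⟩`.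

The order of `z` is exactly `2`: sending `z` to `-1` and `τ̃ᵢ` to the simple root `eᵢ - eᵢ₊₁`
represents `S̃ₙ` in the Clifford algebra of the form `-‖v‖² / 2`. Finally, a set-theoretic section
of a homomorphism whose kernel is cyclic of order `2` gives a normal form. -/

theorem bijective_pow_mul_section {G H : Type*} [Group G] [Group H] {p : G →* H} {s : H → G}
    {z : G} {m : ℕ} [NeZero m] (hs : Function.LeftInverse p s)
    (hker : p.ker = Subgroup.zpowers z) (hz : orderOf z = m) :
    Function.Bijective fun ux : ZMod m × H => z ^ ux.1.val * s ux.2 := by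
  have hpz : p z = 1 := hker.ge (Subgroup.mem_zpowers z)
  refine ⟨?_, fun g => ?_⟩
  · rintro ⟨u, x⟩ ⟨v, y⟩ h
    obtain rfl : x = y := by simpa [hpz, hs _] using congrArg p h
    have huv : u.val = v.val := pow_injOn_Iio_orderOf (hz ▸ ZMod.val_lt u) (hz ▸ ZMod.val_lt v)
      (mul_right_cancel h)
    rw [ZMod.val_injective m huv]
  · have hg : g * (s (p g))⁻¹ ∈ p.ker := by simp [hs _]
    obtain ⟨k, hk⟩ := Subgroup.mem_zpowers_iff.1 (hker ▸ hg)
    refine ⟨(k, p g), ?_⟩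
    change z ^ (k : ZMod m).val * s (p g) = g
    rw [← zpow_natCast, ZMod.val_intCast, ← hz, zpow_mod_orderOf, hk, inv_mul_cancel_right]

-- The last letter `a` of `l` is moved to its place by a single transposition, on the right.
theorem exists_eq_prod_map_swap {α : Type*} [PartialOrder α] [DecidableEq α] {l : List α}
    (hl : l.Pairwise (· < ·)) {x : Perm α} (hx : ∀ a ∉ l, x a = a) :
    ∃ i : α → α, (∀ a, i a ≤ a) ∧ x = (l.map fun a => swap (i a) a).prod := by
  induction l using List.reverseRecOn generalizing x with
  | nil => exact ⟨id, fun _ => le_rfl, Perm.ext fun a => by simpa using hx a⟩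
  | append_singleton l a ih =>
    obtain ⟨hl, -, hla⟩ := List.pairwise_append.1 hl
    have ha : a ∉ l := fun h => (hla a h a (by simp)).false
    have hxa : x (x.symm a) = a := x.apply_symm_apply a
    have hle : x.symm a ≤ a := by
      by_contra h
      have hmem : x.symm a ∉ l ++ [a] := by
        simpa using ⟨fun hb => h (hla _ hb a (by simp)).le, fun hb => h hb.le⟩
      exact h ((hx _ hmem).symm.trans hxa).le
    have hfix : ∀ b ∉ l, (x * swap (x.symm a) a) b = b := fun b hb => by
      rcases eq_or_ne b a with rfl | hba
      · rw [Perm.mul_apply, swap_apply_right, hxa]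
      · have hxb : x b = b := hx b (by simp [hb, hba])
        have hb' : b ≠ x.symm a := fun h => hba (by rw [← hxb, h, hxa])
        rw [Perm.mul_apply, swap_apply_of_ne_of_ne hb' hba, hxb]
    obtain ⟨i, hi, hxi⟩ := ih hl hfix
    refine ⟨Function.update i a (x.symm a), fun b => ?_, ?_⟩
    · rcases eq_or_ne b a with rfl | hba
      · simpa using hle
      · simpa [hba] using hi b
    · have hmap : (l.map fun b => swap (Function.update i a (x.symm a) b) b) =
          l.map fun b => swap (i b) b :=
        List.map_congr_left fun b hb => by rw [Function.update_of_ne (ne_of_mem_of_not_mem hb ha)]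
      simp [hmap, ← hxi, mul_assoc]

theorem swap_mul_swap_mul_swap' {α : Type*} [DecidableEq α] {a b c : α} (hac : a ≠ c)
    (hbc : b ≠ c) : swap a b * swap b c * swap a b = swap a c := by
  rw [swap_comm a b, swap_comm b c, swap_mul_swap_mul_swap hbc.symm hac.symm]

/-! ### Coxeter relations of type `A` -/

/-- The Coxeter relations of type `A` for elements `t 0, …, t (n - 2)` of a group, corresponding to
the adjacent transpositions of `n` letters; the other values of `t` are irrelevant. -/
structure CoxeterRelations {G : Type*} [Group G] (n : ℕ) (t : ℕ → G) : Prop where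
  mul_self {i : ℕ} : i + 1 < n → t i * t i = 1
  commute {i j : ℕ} : i + 1 < j → j + 1 < n → Commute (t i) (t j)
  braid {i : ℕ} : i + 2 < n → t i * t (i + 1) * t i = t (i + 1) * t i * t (i + 1)

/-- The descending product `t (i + l - 1) ⋯ t (i + 1) * t i` of `l` factors. When `i + l = m + 1`,
these represent the cosets of `⟨t 0, …, t (m - 1)⟩` in `⟨t 0, …, t m⟩`. -/
def descProd {G : Type*} [Group G] (t : ℕ → G) (i : ℕ) : ℕ → G
  | 0 => 1
  | l + 1 => t (i + l) * descProd t i l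

/-- The standard parabolic subgroup `⟨t 0, …, t (m - 1)⟩`. -/
def initialSubgroup {G : Type*} [Group G] (t : ℕ → G) (m : ℕ) : Subgroup G :=
  Subgroup.closure (t '' Set.Iio m)

section Coxeter

variable {G : Type*} [Group G] {n : ℕ} {t : ℕ → G}

theorem descProd_succ_eq_mul_right (t : ℕ → G) (i l : ℕ) :
    descProd t i (l + 1) = descProd t (i + 1) l * t i := by
  induction l with
  | zero => simp [descProd]
  | succ l ih => rw [descProd, ih, descProd, mul_assoc, Nat.add_right_comm, add_assoc]

theorem commute_descProd {g : G} {i l : ℕ} (h : ∀ k, i ≤ k → k < i + l → Commute (t k) g) :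
    Commute (descProd t i l) g := by
  induction l with
  | zero => exact Commute.one_left g
  | succ l ih =>
    exact (h _ (by omega) (by omega)).mul_left (ih fun k hk hk' => h k hk (by omega))

theorem mem_initialSubgroup {m k : ℕ} (h : k < m) : t k ∈ initialSubgroup t m :=
  Subgroup.subset_closure ⟨k, h, rfl⟩

namespace CoxeterRelations

theorem descProd_mul_succ (ht : CoxeterRelations n t) {i j l : ℕ} (hij : i ≤ j)
    (hjl : j + 1 < i + l) (hl : i + l < n) :
    descProd t i l * t (j + 1) = t j * descProd t i l := by
  induction l with
  | zero => omega
  | succ l ih =>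
    rcases Nat.lt_or_ge (j + 1) (i + l) with h | h
    · rw [descProd, mul_assoc, ih h (by omega), ← mul_assoc, ← mul_assoc,
        (ht.commute h (by omega)).eq]
    · obtain ⟨l, rfl⟩ : ∃ l', l = l' + 1 := ⟨l - 1, by omega⟩
      obtain rfl : j = i + l := by omega
      have hcomm : Commute (descProd t i l) (t (i + l + 1)) :=
        commute_descProd fun k _ hk => ht.commute (by omega) (by omega)
      calc t (i + l + 1) * (t (i + l) * descProd t i l) * t (i + l + 1)
          = t (i + l + 1) * t (i + l) * t (i + l + 1) * descProd t i l := by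
            simp only [mul_assoc, hcomm.eq]
        _ = t (i + l) * (t (i + l + 1) * (t (i + l) * descProd t i l)) := by
            rw [← ht.braid (by omega)]; simp only [mul_assoc]

theorem exists_descProd_mul_eq (ht : CoxeterRelations n t) {m i j l : ℕ} (hm : m + 1 < n)
    (hil : i + l = m + 1) (hj : j < m + 1) :
    ∃ h ∈ initialSubgroup t m, ∃ i' l', i' + l' = m + 1 ∧
      descProd t i l * t j = h * descProd t i' l' := by
  rcases lt_trichotomy (j + 1) i with hji | rfl | hji
  · have hcomm : Commute (descProd t i l) (t j) :=
      commute_descProd fun k hk _ => (ht.commute (by omega) (by omega)).symm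
    exact ⟨t j, mem_initialSubgroup (by omega), i, l, hil, hcomm.eq⟩
  · exact ⟨1, one_mem _, j, l + 1, by omega, by rw [descProd_succ_eq_mul_right, one_mul]⟩
  · rcases Nat.lt_or_ge i j with hij | hij
    · obtain ⟨j, rfl⟩ : ∃ j', j = j' + 1 := ⟨j - 1, by omega⟩
      exact ⟨t j, mem_initialSubgroup (by omega), i, l, hil,
        ht.descProd_mul_succ (by omega) (by omega) (by omega)⟩
    · obtain rfl : i = j := by omega
      obtain ⟨l, rfl⟩ : ∃ l', l = l' + 1 := ⟨l - 1, by omega⟩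
      refine ⟨1, one_mem _, i + 1, l, by omega, ?_⟩
      rw [descProd_succ_eq_mul_right, mul_assoc, ht.mul_self (by omega), mul_one, one_mul]

theorem exists_eq_mul_descProd (ht : CoxeterRelations n t) {m : ℕ} (hm : m + 1 < n) {x : G}
    (hx : x ∈ initialSubgroup t (m + 1)) :
    ∃ h ∈ initialSubgroup t m, ∃ i l, i + l = m + 1 ∧ x = h * descProd t i l := by
  have mul_right : ∀ x : G, ∀ j < m + 1,
      (∃ h ∈ initialSubgroup t m, ∃ i l, i + l = m + 1 ∧ x = h * descProd t i l) →
      ∃ h ∈ initialSubgroup t m, ∃ i l, i + l = m + 1 ∧ x * t j = h * descProd t i l := by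
    rintro _ j hj ⟨h, hh, i, l, hil, rfl⟩
    obtain ⟨h', hh', i', l', hil', heq⟩ := ht.exists_descProd_mul_eq hm hil hj
    exact ⟨h * h', mul_mem hh hh', i', l', hil', by rw [mul_assoc, heq, mul_assoc]⟩
  induction hx using Subgroup.closure_induction_right with
  | one => exact ⟨1, one_mem _, m + 1, 0, rfl, (one_mul _).symm⟩
  | mul_right x _ y hy ih =>
    obtain ⟨j, hj, rfl⟩ := hy
    exact mul_right x j hj ih
  | mul_inv_cancel x _ y hy ih =>
    obtain ⟨j, hj : j < m + 1, rfl⟩ := hy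
    rw [inv_eq_of_mul_eq_one_right (ht.mul_self (by omega))]
    exact mul_right x j hj ih

end CoxeterRelations

variable {p : G →* Perm (Fin n)}

theorem map_apply_of_mem_initialSubgroup
    (hp : ∀ k (hk : k + 1 < n), p (t k) = swap ⟨k, by omega⟩ ⟨k + 1, hk⟩)
    {m : ℕ} {x : G} (hx : x ∈ initialSubgroup t m) {a : Fin n} (ha : m < a) : p x a = a := by
  have hle : initialSubgroup t m ≤ (MulAction.stabilizer (Perm (Fin n)) a).comap p := by
    refine (Subgroup.closure_le _).2 ?_
    rintro _ ⟨k, hk : k < m, rfl⟩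
    change p (t k) a = a
    rw [hp k (by omega)]
    exact swap_apply_of_ne_of_ne (Fin.ne_of_val_ne (by dsimp; omega))
      (Fin.ne_of_val_ne (by dsimp; omega))
  exact hle hx

theorem map_descProd_apply
    (hp : ∀ k (hk : k + 1 < n), p (t k) = swap ⟨k, by omega⟩ ⟨k + 1, hk⟩)
    {i l : ℕ} (h : i + l < n) : p (descProd t i l) ⟨i, by omega⟩ = ⟨i + l, h⟩ := by
  induction l with
  | zero => simp [descProd]
  | succ l ih =>
    rw [descProd, map_mul, Perm.mul_apply, ih (by omega), hp _ (by omega), swap_apply_left]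
    rfl

theorem CoxeterRelations.eq_one_of_mem_initialSubgroup (ht : CoxeterRelations n t)
    (hp : ∀ k (hk : k + 1 < n), p (t k) = swap ⟨k, by omega⟩ ⟨k + 1, hk⟩)
    {m : ℕ} (hm : m ≤ n - 1) {x : G} (hx : x ∈ initialSubgroup t m) (hpx : p x = 1) : x = 1 := by
  induction m generalizing x with
  | zero => simpa [initialSubgroup] using hx
  | succ m ih =>
    obtain ⟨h, hh, i, l, hil, rfl⟩ := ht.exists_eq_mul_descProd (by omega) hx
    have hi : p (h * descProd t i l) ⟨i, by omega⟩ = ⟨i + l, by omega⟩ := by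
      rw [map_mul, Perm.mul_apply, map_descProd_apply hp (by omega)]
      exact map_apply_of_mem_initialSubgroup hp hh (by dsimp; omega)
    obtain rfl : l = 0 := by simpa [hpx] using hi
    rw [descProd, mul_one] at hpx ⊢
    exact ih (by omega) hh hpx

theorem CoxeterRelations.injective (ht : CoxeterRelations n t)
    (hgen : initialSubgroup t (n - 1) = ⊤)
    (hp : ∀ k (hk : k + 1 < n), p (t k) = swap ⟨k, by omega⟩ ⟨k + 1, hk⟩) :
    Function.Injective p :=
  (injective_iff_map_eq_one p).2 fun _ =>
    ht.eq_one_of_mem_initialSubgroup hp le_rfl (hgen ▸ Subgroup.mem_top _)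

end Coxeter

/-! ### The universal property of the spin extension -/

/-- The defining relations of `S̃ₙ` for elements `z` and `t i` of an arbitrary group, with the
relation for distant generators imposed only for `i < j`; the other case follows from `z² = 1`. -/
structure SpinRelations {G : Type*} [Group G] (n : ℕ) (z : G) (t : Fin (n - 1) → G) : Prop where
  z_mul_z : z * z = 1
  z_mul (i : Fin (n - 1)) : z * t i = t i * z
  mul_self (i : Fin (n - 1)) : t i * t i = z
  mul_eq_of_lt {i j : Fin (n - 1)} : (i : ℕ) + 1 < j → t i * t j = z * t j * t i
  braid {i j : Fin (n - 1)} : (j : ℕ) = i + 1 → t i * t j * t i = t j * t i * t j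

theorem spinRelations_zt_tt (n : ℕ) : SpinRelations n (zt n) (tt n) where
  z_mul_z := PresentedGroup.one_of_mem (x := zF n * zF n) (by simp [spinRels])
  z_mul i := PresentedGroup.mk_eq_mk_of_mul_inv_mem (x := zF n * tF n i) (y := tF n i * zF n)
    (Or.inl (Or.inl (Or.inl (Or.inr ⟨i, rfl⟩))))
  mul_self i := PresentedGroup.mk_eq_mk_of_mul_inv_mem (x := tF n i * tF n i) (y := zF n)
    (Or.inl (Or.inl (Or.inr ⟨i, rfl⟩)))
  mul_eq_of_lt {i j} h := PresentedGroup.mk_eq_mk_of_mul_inv_mem (x := tF n i * tF n j)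
    (y := zF n * tF n j * tF n i) (Or.inl (Or.inr ⟨i, j, by rw [lt_abs]; omega, rfl⟩))
  braid {i j} h := PresentedGroup.mk_eq_mk_of_mul_inv_mem (x := tF n i * tF n j * tF n i)
    (y := tF n j * tF n i * tF n j) (Or.inr ⟨i, j, h, rfl⟩)

namespace SpinRelations

variable {G : Type*} [Group G] {n : ℕ} {z : G} {t : Fin (n - 1) → G}

theorem lift_eq_one (h : SpinRelations n z t) :
    ∀ r ∈ spinRels n, FreeGroup.lift (Sum.elim t fun _ => z) r = 1 := by
  rintro r ((((rfl | ⟨i, rfl⟩) | ⟨i, rfl⟩) | ⟨i, j, hij, rfl⟩) | ⟨i, j, hij, rfl⟩) <;>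
    simp only [zF, tF, map_mul, map_inv, FreeGroup.lift_apply_of, Sum.elim_inl, Sum.elim_inr,
      mul_inv_eq_one]
  · exact h.z_mul_z
  · exact h.z_mul i
  · exact h.mul_self i
  · rcases lt_abs.1 hij with hji | hij
    · rw [mul_assoc, h.mul_eq_of_lt (i := j) (j := i) (by omega), mul_assoc, ← mul_assoc z,
        h.z_mul_z, one_mul]
    · exact h.mul_eq_of_lt (by omega)
  · exact h.braid hij

/-- The homomorphism out of `S̃ₙ` determined by elements satisfying its defining relations. -/
def lift (h : SpinRelations n z t) : SpinSym n →* G :=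
  PresentedGroup.toGroup h.lift_eq_one

theorem lift_zt (h : SpinRelations n z t) : h.lift (zt n) = z :=
  PresentedGroup.toGroup.of h.lift_eq_one

theorem lift_tt (h : SpinRelations n z t) (i : Fin (n - 1)) : h.lift (tt n i) = t i :=
  PresentedGroup.toGroup.of h.lift_eq_one

end SpinRelations

/-! ### The projection onto the symmetric group and its kernel -/

theorem spinRelations_swap (n : ℕ) :
    SpinRelations n (1 : Perm (Fin n)) fun i => swap (finL n i) (finR n i) where
  z_mul_z := one_mul 1
  z_mul _ := by rw [one_mul, mul_one]
  mul_self _ := swap_mul_self _ _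
  mul_eq_of_lt {i j} h := by
    have hdisj : Perm.Disjoint (swap (finL n i) (finR n i)) (swap (finL n j) (finR n j)) :=
      Perm.disjoint_swap_swap (by simp [finL, finR]; omega)
    rw [one_mul, hdisj.commute.eq]
  braid {i j} h := by
    have hmid : finL n j = finR n i := Fin.ext h
    have hi : finL n i ≠ finR n i := Fin.ne_of_val_ne (by simp [finL, finR])
    have hj : finR n i ≠ finR n j := Fin.ne_of_val_ne (by simp [finR]; omega)
    have hij : finL n i ≠ finR n j := Fin.ne_of_val_ne (by simp [finL, finR]; omega)
    rw [hmid, swap_mul_swap_mul_swap' hij hj, swap_mul_swap_mul_swap hi hij, swap_comm]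

/-- The projection `p : S̃ₙ → Sₙ`. -/
def toPerm (n : ℕ) : SpinSym n →* Perm (Fin n) :=
  (spinRelations_swap n).lift

theorem eq_toPerm {n : ℕ} {p : SpinSym n →* Perm (Fin n)}
    (hpt : ∀ i, p (tt n i) = swap (finL n i) (finR n i)) (hpz : p (zt n) = 1) : p = toPerm n :=
  PresentedGroup.ext <| by
    rintro (i | _)
    · exact (hpt i).trans ((spinRelations_swap n).lift_tt i).symm
    · exact hpz.trans (spinRelations_swap n).lift_zt.symm

theorem ttN_of_lt {n k : ℕ} (hk : k + 1 < n) : ttN n k = tt n ⟨k, by omega⟩ :=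
  dif_pos _

theorem toPerm_ttN {n k : ℕ} (hk : k + 1 < n) :
    toPerm n (ttN n k) = swap ⟨k, by omega⟩ ⟨k + 1, hk⟩ := by
  rw [ttN_of_lt hk]
  exact (spinRelations_swap n).lift_tt _

theorem zt_mem_center (n : ℕ) : zt n ∈ Subgroup.center (SpinSym n) := by
  refine Subgroup.mem_center_iff.2 fun g => Subgroup.mem_centralizer_singleton_iff.1 ?_
  refine PresentedGroup.generated_by _ (Subgroup.centralizer {zt n}) ?_ g
  rintro (i | _) <;> refine Subgroup.mem_centralizer_singleton_iff.2 ?_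
  · exact ((spinRelations_zt_tt n).z_mul i).symm
  · rfl

instance normal_zpowers_zt (n : ℕ) : (Subgroup.zpowers (zt n)).Normal where
  conj_mem x hx g := by
    have hcenter := Subgroup.zpowers_le.2 (zt_mem_center n) hx
    rwa [Subgroup.mem_center_iff.1 hcenter g, mul_inv_cancel_right]

/-- The image of `τ̃ₖ` in the quotient of `S̃ₙ` by the central subgroup `⟨z⟩`. -/
def ttBar (n k : ℕ) : SpinSym n ⧸ Subgroup.zpowers (zt n) := (ttN n k : SpinSym n)

theorem coe_zt (n : ℕ) : (zt n : SpinSym n ⧸ Subgroup.zpowers (zt n)) = 1 :=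
  (QuotientGroup.eq_one_iff _).2 (Subgroup.mem_zpowers _)

theorem coxeterRelations_ttBar (n : ℕ) : CoxeterRelations n (ttBar n) where
  mul_self {i} hi := by
    rw [ttBar, ← QuotientGroup.mk_mul, ttN_of_lt hi, (spinRelations_zt_tt n).mul_self, coe_zt]
  commute {i j} hij hj := by
    rw [commute_iff_eq, ttBar, ttBar, ← QuotientGroup.mk_mul, ttN_of_lt hj,
      ttN_of_lt (k := i) (by omega), (spinRelations_zt_tt n).mul_eq_of_lt hij, mul_assoc,
      QuotientGroup.mk_mul, coe_zt, one_mul, QuotientGroup.mk_mul]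
  braid {i} hi := by
    simp only [ttBar, ← QuotientGroup.mk_mul]
    rw [ttN_of_lt hi, ttN_of_lt (k := i) (by omega), (spinRelations_zt_tt n).braid rfl]

theorem initialSubgroup_ttBar (n : ℕ) : initialSubgroup (ttBar n) (n - 1) = ⊤ := by
  refine eq_top_iff.2 fun x _ => ?_
  obtain ⟨g, rfl⟩ := QuotientGroup.mk'_surjective _ x
  refine PresentedGroup.generated_by _ ((initialSubgroup (ttBar n) (n - 1)).comap
    (QuotientGroup.mk' _)) ?_ g
  rintro (i | _)
  · change (tt n i : SpinSym n ⧸ Subgroup.zpowers (zt n)) ∈ initialSubgroup (ttBar n) (n - 1)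
    have hi : ttBar n i = tt n i := by rw [ttBar, ttN_of_lt (by omega)]
    exact hi ▸ mem_initialSubgroup i.2
  · change (zt n : SpinSym n ⧸ Subgroup.zpowers (zt n)) ∈ initialSubgroup (ttBar n) (n - 1)
    exact coe_zt n ▸ one_mem _

theorem ker_toPerm (n : ℕ) : (toPerm n).ker = Subgroup.zpowers (zt n) := by
  have hle : Subgroup.zpowers (zt n) ≤ (toPerm n).ker :=
    Subgroup.zpowers_le.2 (spinRelations_swap n).lift_zt
  have hinj : Function.Injective (QuotientGroup.lift _ (toPerm n) hle) :=
    (coxeterRelations_ttBar n).injective (initialSubgroup_ttBar n) fun _ hk => toPerm_ttN hk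
  exact ((QuotientGroup.injective_lift_iff _ _ hle).1 hinj).symm

/-! ### The order of the central element -/

section CliffordRepresentation

open CliffordAlgebra QuadraticMap

theorem ι_braid_of_polar_eq_neg {R M : Type*} [CommRing R] [AddCommGroup M] [Module R M]
    {Q : QuadraticForm R M} {a b : M} (hQ : Q a = Q b) (hpolar : polar Q a b = -Q a) :
    ι Q a * ι Q b * ι Q a = ι Q b * ι Q a * ι Q b := by
  rw [ι_mul_ι_mul_ι, ι_mul_ι_mul_ι, polar_comm Q b a, hpolar, ← hQ]
  congr 1
  module

/-- The quadratic form `-‖v‖² / 2`, scaled so that the simple roots take the value `-1`. -/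
def rootForm (n : ℕ) : QuadraticForm ℚ (Fin n → ℚ) :=
  LinearMap.BilinMap.toQuadraticMap ((-1 / 2 : ℚ) • dotProductBilin ℚ ℚ)

/-- The simple root `eᵢ - eᵢ₊₁` of type `A`. -/
def simpleRoot (n : ℕ) (i : Fin (n - 1)) : Fin n → ℚ :=
  Pi.single (finL n i) 1 - Pi.single (finR n i) 1

theorem rootForm_apply (n : ℕ) (v : Fin n → ℚ) : rootForm n v = -1 / 2 * (v ⬝ᵥ v) :=
  rfl

theorem rootForm_simpleRoot (n : ℕ) (i : Fin (n - 1)) : rootForm n (simpleRoot n i) = -1 := by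
  have hdot : simpleRoot n i ⬝ᵥ simpleRoot n i = 2 := by
    norm_num [simpleRoot, finL, finR]
  rw [rootForm_apply, hdot]
  norm_num

theorem polar_rootForm (n : ℕ) (v w : Fin n → ℚ) : polar (rootForm n) v w = -(v ⬝ᵥ w) := by
  simp only [polar, rootForm_apply, add_dotProduct, dotProduct_add, dotProduct_comm w v]
  ring

theorem simpleRoot_dotProduct (n : ℕ) {i j : Fin (n - 1)} (h : (i : ℕ) < j) :
    simpleRoot n i ⬝ᵥ simpleRoot n j = if (j : ℕ) = i + 1 then -1 else 0 := by
  have h1 : (i : ℕ) ≠ j := by omega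
  have h2 : (i : ℕ) ≠ j + 1 := by omega
  simp only [simpleRoot, sub_dotProduct, single_one_dotProduct, Pi.sub_apply, Pi.single_apply,
    finL, finR, Fin.ext_iff, add_left_inj, h1, h2, if_false, sub_zero, eq_comm (a := (j : ℕ))]
  split_ifs <;> norm_num

/-- The simple root as a unit of the Clifford algebra. -/
def rootUnit (n : ℕ) (i : Fin (n - 1)) : (CliffordAlgebra (rootForm n))ˣ where
  val := ι _ (simpleRoot n i)
  inv := -ι _ (simpleRoot n i)
  val_inv := by simp [rootForm_simpleRoot]
  inv_val := by simp [rootForm_simpleRoot]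

theorem spinRelations_rootUnit (n : ℕ) : SpinRelations n (-1) (rootUnit n) where
  z_mul_z := by simp
  z_mul i := by simp
  mul_self i := Units.ext <| by simp [rootUnit, rootForm_simpleRoot]
  mul_eq_of_lt {i j} h := Units.ext <| by
    have hortho : (rootForm n).IsOrtho (simpleRoot n i) (simpleRoot n j) := by
      rw [← isOrtho_polarBilin, polarBilin_apply_apply, polar_rootForm,
        simpleRoot_dotProduct n (by omega), if_neg (by omega), neg_zero]
    simpa [rootUnit] using ι_mul_ι_comm_of_isOrtho hortho
  braid {i j} h := Units.ext <| ι_braid_of_polar_eq_neg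
    (by rw [rootForm_simpleRoot, rootForm_simpleRoot])
    (by rw [polar_rootForm, simpleRoot_dotProduct n (by omega), if_pos h, rootForm_simpleRoot])

theorem zt_ne_one (n : ℕ) : zt n ≠ 1 := fun h => by
  have : CharZero (CliffordAlgebra (rootForm n)) := algebraRat.charZero _
  have hunit : (-1 : (CliffordAlgebra (rootForm n))ˣ) = 1 := by
    rw [← (spinRelations_rootUnit n).lift_zt, h, map_one]
  exact Ring.neg_one_ne_one_of_char_ne_two (by simp [ringChar.eq_zero])
    (congrArg Units.val hunit)

end CliffordRepresentation

theorem orderOf_zt (n : ℕ) : orderOf (zt n) = 2 :=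
  orderOf_eq_prime (by rw [sq, (spinRelations_zt_tt n).z_mul_z]) (zt_ne_one n)

/-! ### The section -/

theorem exists_isFactorization {n : ℕ} (x : Perm (Fin n)) : ∃ i, IsFactorization n x i :=
  exists_eq_prod_map_swap (List.pairwise_lt_finRange n) fun a ha =>
    absurd (List.mem_finRange a) ha

theorem ttilCore_self (n i : ℕ) : ttilCore n i i = 1 := by
  simp [ttilCore]

theorem ttilCore_succ_self (n i : ℕ) : ttilCore n i (i + 1) = ttN n i := by
  simp [ttilCore]

theorem ttilCore_succ_of_lt (n : ℕ) {i m : ℕ} (h : i < m) :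
    ttilCore n i (m + 1) = ttN n i * ttilCore n (i + 1) (m + 1) * ttN n i := by
  have hasc : List.range' i (m + 1 - i) = i :: List.range' (i + 1) (m - i) := by
    rw [Nat.succ_sub h.le, List.range'_succ]
  have hdesc : List.range' i (m - i) = i :: List.range' (i + 1) (m - (i + 1)) := by
    rw [← List.range'_succ]; congr 1; omega
  simp only [ttilCore, Nat.add_sub_add_right, Nat.add_sub_cancel, hasc]
  rw [hdesc]
  simp [mul_assoc]

theorem toPerm_ttilCore {n i m : ℕ} (hi : i ≤ m) (hm : m + 1 < n) :
    toPerm n (ttilCore n i (m + 1)) = swap ⟨i, by omega⟩ ⟨m + 1, hm⟩ := by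
  induction hi using Nat.decreasingInduction with
  | self => rw [ttilCore_succ_self, toPerm_ttN hm]
  | of_succ i hi ih =>
    rw [ttilCore_succ_of_lt n hi, map_mul, map_mul, ih, toPerm_ttN (by omega)]
    exact swap_mul_swap_mul_swap' (Fin.ne_of_val_ne (by dsimp; omega))
      (Fin.ne_of_val_ne (by dsimp; omega))

theorem toPerm_ttil {n : ℕ} {i j : Fin n} (h : i ≤ j) : toPerm n (ttil n i j) = swap i j := by
  rw [ttil, if_neg (not_lt.2 (Fin.le_def.1 h))]
  rcases h.eq_or_lt with rfl | h
  · rw [ttilCore_self, map_one, swap_self]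
    rfl
  · obtain ⟨_ | m, hm⟩ := j
    · exact absurd h (Nat.not_lt_zero _)
    · exact toPerm_ttilCore (Nat.lt_succ_iff.1 h) hm

theorem toPerm_sec (n : ℕ) (x : Perm (Fin n)) : toPerm n (sec n x) = x := by
  have h := exists_isFactorization x
  obtain ⟨hle, hprod⟩ := h.choose_spec
  rw [sec, dif_pos h, map_list_prod, List.map_map]
  conv_rhs => rw [hprod]
  exact congrArg List.prod (List.map_congr_left fun k _ => toPerm_ttil (hle k))

theorem section_normal_form (n : ℕ) (hn : 2 ≤ n)
    (p : SpinSym n →* Equiv.Perm (Fin n))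
    (hpt : ∀ i : Fin (n-1), p (tt n i) = Equiv.swap (finL n i) (finR n i))
    (hpz : p (zt n) = 1) :
    (∀ x : Equiv.Perm (Fin n), p (sec n x) = x) ∧
    Function.Bijective
      (fun ux : ZMod 2 × Equiv.Perm (Fin n) => zt n ^ (ux.1.val) * sec n ux.2) := by
  obtain rfl : p = toPerm n := eq_toPerm hpt hpz
  exact ⟨toPerm_sec n, bijective_pow_mul_section (toPerm_sec n) (ker_toPerm n) (orderOf_zt n)⟩
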